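/- Let D > 192 be an integer and σ, R > 0 with R² > σ²(D−3). Set s⋆ = √(R² − σ²(D−3)), ν² = σ⁴(D−3)/(2s⋆²), and C(D) = ((D−3)/2)^{(D−3)/2} e^{−(D−3)/2} / Γ((D−1)/2). Suppose σ² √D ≤ s⋆² ≤ 3σ²D. Then for every s with |s − s⋆| ≤ (1/3) σ (D−3)^{1/6}, the function −h'(s) = (1/Γ((D−1)/2)) · (s/σ²) · ((R²−s²)/(2σ²))^{(D−3)/2} · e^{−(R²−s²)/(2σ²)} satisfies (1/(8e)) · C(D) · (s⋆/σ²) · exp(−(s−s⋆)²/(2ν²)) ≤ −h'(s) ≤ 6e · C(D) · (s⋆/σ²) · exp(−(s−s⋆)²/(2ν²)). -/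

import Mathlib

/-- The negative derivative `-h'(s)` of
`h(s) = P[χ²_{D-1} ≤ (R² - s²)/σ²]`, valid for `0 < s < R`:
`-h'(s) = (1/Γ((D-1)/2)) · (s/σ²) · ((R²-s²)/(2σ²))^((D-3)/2) · e^(-(R²-s²)/(2σ²))`. -/
noncomputable def negDH (D : ℕ) (σ R : ℝ) (s : ℝ) : ℝ :=
  (1 / Real.Gamma (((D : ℝ) - 1) / 2)) * (s / σ ^ 2) *
    ((R ^ 2 - s ^ 2) / (2 * σ ^ 2)) ^ (((D : ℝ) - 3) / 2) *
    Real.exp (-((R ^ 2 - s ^ 2) / (2 * σ ^ 2)))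

/-- `C(D) = ((D-3)/2)^((D-3)/2) e^(-(D-3)/2) / Γ((D-1)/2)`. -/
noncomputable def CofD (D : ℕ) : ℝ :=
  (((D : ℝ) - 3) / 2) ^ (((D : ℝ) - 3) / 2) * Real.exp (-(((D : ℝ) - 3) / 2)) /
    Real.Gamma (((D : ℝ) - 1) / 2)

/-!
Put `n = D - 3`, `t = s⋆` and let `x = (s² - t²) / (σ² n)`. Since `R² = t² + σ² n`, one has
`(R² - s²) / (2σ²) = (n / 2) (1 - x)`, and hence exactly
`-h'(s) = C(D) · (s / σ²) · exp ((n / 2) (log (1 - x) + x))`. To second order the exponent is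
`-(n / 4) x²`, whose leading part `-t² (s - t)² / (σ⁴ n)` is the Gaussian exponent
`-(s - t)² / (2ν²)`. For `|s - t| ≤ σ n^(1/6) / 3` and `t = O(σ √n)` the remaining part of `x²` and
the cubic remainder of the logarithm, of order `n |x|³`, are bounded: the exponents differ by at
most `2`. Finally `|s - t| ≤ t / 3` gives `(2/3) t ≤ s ≤ (4/3) t`, and `1 / (8e) ≤ (2/3) e⁻²`,
`(4/3) e² ≤ 6e`.
-/

/-- The relative deviation `x` of `(R² - s²) / (2σ²)` from its value `n / 2` at `s = t`, where
`R² = t² + σ² n`; that is, `(R² - s²) / (2σ²) = (n / 2) (1 - x)`. -/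
noncomputable def relDeviation (n σ t s : ℝ) : ℝ :=
  (s ^ 2 - t ^ 2) / (σ ^ 2 * n)

/-- The exponent `(n / 2) (log (1 - x) + x)` of `-h'(s)` minus the Gaussian exponent
`-(s - t)² / (2ν²)`, the latter written out using `ν² = σ⁴ n / (2t²)`. -/
noncomputable def exponentError (n σ t s : ℝ) : ℝ :=
  n / 2 * (Real.log (1 - relDeviation n σ t s) + relDeviation n σ t s) +
    t ^ 2 * (s - t) ^ 2 / (σ ^ 4 * n)

lemma abs_log_one_sub_add_add_sq_div_two_le {x : ℝ} (hx : |x| < 1) :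
    |Real.log (1 - x) + x + x ^ 2 / 2| ≤ |x| ^ 3 / (1 - |x|) := by
  convert Real.abs_log_sub_add_sum_range_le hx 2 using 2
  norm_num [Finset.sum_range_succ]
  ring

lemma exponentError_eq {n σ : ℝ} (hn : n ≠ 0) (hσ : σ ≠ 0) (t s : ℝ) :
    exponentError n σ t s =
      n / 2 * (Real.log (1 - relDeviation n σ t s) + relDeviation n σ t s +
        relDeviation n σ t s ^ 2 / 2) -
      (t * (s - t) ^ 3 + (s - t) ^ 4 / 4) / (σ ^ 4 * n) := by
  have hsq : n / 2 * (relDeviation n σ t s ^ 2 / 2) =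
      t ^ 2 * (s - t) ^ 2 / (σ ^ 4 * n) +
        (t * (s - t) ^ 3 + (s - t) ^ 4 / 4) / (σ ^ 4 * n) := by
    unfold relDeviation
    field_simp
    ring
  unfold exponentError
  linear_combination -hsq

section CriticalWindow

variable {m σ t s : ℝ}

lemma abs_relDeviation_le (hm : 0 < m) (hm2 : 3 ≤ m ^ 2) (hσ : 0 < σ) (ht : 0 ≤ t)
    (htm : t ≤ 11 / 6 * (σ * m ^ 3)) (hs : |s - t| ≤ σ * m / 3) :
    |relDeviation (m ^ 6) σ t s| ≤ 63 / 50 / m ^ 2 := by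
  have hsum : |s + t| ≤ 2 * t + σ * m / 3 := by
    rw [abs_le] at hs ⊢
    constructor <;> linarith
  have hlower : m ^ 2 ≤ m ^ 4 / 3 := by nlinarith
  have hdiff : |s ^ 2 - t ^ 2| ≤ 63 / 50 * (σ ^ 2 * m ^ 4) :=
    calc |s ^ 2 - t ^ 2| = |s + t| * |s - t| := by rw [sq_sub_sq, abs_mul]
      _ ≤ (2 * (11 / 6 * (σ * m ^ 3)) + σ * m / 3) * (σ * m / 3) := by
        gcongr
        linarith
      _ = σ ^ 2 * (11 / 9 * m ^ 4 + m ^ 2 / 9) := by ring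
      _ ≤ σ ^ 2 * (63 / 50 * m ^ 4) := by
        gcongr
        linarith [pow_pos hm 4]
      _ = 63 / 50 * (σ ^ 2 * m ^ 4) := by ring
  rw [relDeviation, abs_div, abs_of_pos (by positivity : 0 < σ ^ 2 * m ^ 6),
    div_le_div_iff₀ (by positivity) (by positivity)]
  calc |s ^ 2 - t ^ 2| * m ^ 2 ≤ 63 / 50 * (σ ^ 2 * m ^ 4) * m ^ 2 := by gcongr
    _ = 63 / 50 * (σ ^ 2 * m ^ 6) := by ring

lemma abs_quadratic_correction_le (hm : 1 ≤ m) (hσ : 0 < σ) (ht : 0 ≤ t)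
    (htm : t ≤ 11 / 6 * (σ * m ^ 3)) (hs : |s - t| ≤ σ * m / 3) :
    |(t * (s - t) ^ 3 + (s - t) ^ 4 / 4) / (σ ^ 4 * m ^ 6)| ≤ 1 / 4 := by
  have hpow : m ^ 4 ≤ m ^ 6 := pow_le_pow_right₀ hm (by norm_num)
  rw [abs_div, abs_of_pos (by positivity : 0 < σ ^ 4 * m ^ 6), div_le_iff₀ (by positivity)]
  calc |t * (s - t) ^ 3 + (s - t) ^ 4 / 4|
      ≤ |t * (s - t) ^ 3| + |(s - t) ^ 4 / 4| := abs_add_le _ _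
    _ = t * |s - t| ^ 3 + |s - t| ^ 4 / 4 := by
      rw [abs_mul, abs_div, abs_pow, abs_pow, abs_of_nonneg ht,
        abs_of_pos (four_pos : (0 : ℝ) < 4)]
    _ ≤ 11 / 6 * (σ * m ^ 3) * (σ * m / 3) ^ 3 + (σ * m / 3) ^ 4 / 4 := by gcongr
    _ = σ ^ 4 * (11 / 162 * m ^ 6 + m ^ 4 / 324) := by ring
    _ ≤ σ ^ 4 * (1 / 4 * m ^ 6) := by
      gcongr
      linarith [pow_nonneg (zero_le_one.trans hm) 6]
    _ = 1 / 4 * (σ ^ 4 * m ^ 6) := by ring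

lemma abs_cubic_remainder_le {x : ℝ} (hm2 : 3 ≤ m ^ 2) (hx : |x| ≤ 63 / 50 / m ^ 2) :
    |m ^ 6 / 2 * (Real.log (1 - x) + x + x ^ 2 / 2)| ≤ 7 / 4 := by
  have hm_ne : m ≠ 0 := by
    rintro rfl
    norm_num at hm2
  have hx_small : |x| ≤ 21 / 50 :=
    calc |x| ≤ 63 / 50 / m ^ 2 := hx
      _ ≤ 63 / 50 / 3 := by gcongr
      _ = 21 / 50 := by norm_num
  rw [abs_mul, abs_of_pos (by positivity)]
  calc m ^ 6 / 2 * |Real.log (1 - x) + x + x ^ 2 / 2|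
      ≤ m ^ 6 / 2 * (|x| ^ 3 / (1 - |x|)) := by
        gcongr
        exact abs_log_one_sub_add_add_sq_div_two_le (by linarith)
    _ ≤ m ^ 6 / 2 * ((63 / 50 / m ^ 2) ^ 3 / (29 / 50)) := by
        gcongr
        linarith
    _ = (63 / 50) ^ 3 / (29 / 50) / 2 := by field_simp
    _ ≤ 7 / 4 := by norm_num

lemma abs_exponentError_le_two (hm : 0 < m) (hm2 : 3 ≤ m ^ 2) (hσ : 0 < σ) (ht : 0 ≤ t)
    (htm : t ≤ 11 / 6 * (σ * m ^ 3)) (hs : |s - t| ≤ σ * m / 3) :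
    |exponentError (m ^ 6) σ t s| ≤ 2 := by
  have hm1 : 1 ≤ m := by nlinarith
  have hcubic := abs_cubic_remainder_le hm2 (abs_relDeviation_le hm hm2 hσ ht htm hs)
  have hquadratic := abs_quadratic_correction_le hm1 hσ ht htm hs
  rw [exponentError_eq (by positivity) hσ.ne']
  exact (abs_sub _ _).trans (by linarith)

end CriticalWindow

lemma relDeviation_lt_one_and_abs_exponentError_le_two {n σ t s : ℝ} (hn : 27 ≤ n) (hσ : 0 < σ)
    (ht : 0 ≤ t) (htn : t ^ 2 ≤ 3 * σ ^ 2 * (n + 3))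
    (hs : |s - t| ≤ 1 / 3 * σ * n ^ ((1 : ℝ) / 6)) :
    relDeviation n σ t s < 1 ∧ |exponentError n σ t s| ≤ 2 := by
  obtain ⟨m, hm, rfl⟩ : ∃ m : ℝ, 0 < m ∧ m ^ 6 = n :=
    ⟨n ^ ((1 : ℝ) / 6), by positivity, by
      rw [← Real.rpow_mul_natCast (by linarith)]
      norm_num⟩
  have hroot : (m ^ 6) ^ ((1 : ℝ) / 6) = m := by
    simpa using Real.pow_rpow_inv_natCast hm.le (n := 6) (by norm_num)
  have hm2 : 3 ≤ m ^ 2 := le_of_pow_le_pow_left₀ three_ne_zero (by positivity) (by linarith)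
  have htm : t ≤ 11 / 6 * (σ * m ^ 3) := by
    refine le_of_sq_le_sq ?_ (by positivity)
    nlinarith [sq_nonneg σ]
  have hs' : |s - t| ≤ σ * m / 3 := by
    rw [hroot] at hs
    linarith
  refine ⟨?_, abs_exponentError_le_two hm hm2 hσ ht htm hs'⟩
  calc relDeviation (m ^ 6) σ t s ≤ |relDeviation (m ^ 6) σ t s| := le_abs_self _
    _ ≤ 63 / 50 / m ^ 2 := abs_relDeviation_le hm hm2 hσ ht htm hs'
    _ ≤ 63 / 50 / 3 := by gcongr
    _ < 1 := by norm_num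

lemma CofD_pos {D : ℕ} (hD : 3 < D) : 0 < CofD D := by
  have hD' : (3 : ℝ) < D := mod_cast hD
  have hbase : 0 < ((D : ℝ) - 3) / 2 := by linarith
  have hGamma : 0 < Real.Gamma (((D : ℝ) - 1) / 2) := Real.Gamma_pos_of_pos (by linarith)
  exact div_pos (mul_pos (Real.rpow_pos_of_pos hbase _) (Real.exp_pos _)) hGamma

lemma negDH_eq_CofD_mul_exp {D : ℕ} {σ R s x : ℝ} (hD : 3 ≤ D) (hx : x < 1)
    (h : (R ^ 2 - s ^ 2) / (2 * σ ^ 2) = ((D : ℝ) - 3) / 2 * (1 - x)) :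
    negDH D σ R s =
      CofD D * (s / σ ^ 2) * Real.exp (((D : ℝ) - 3) / 2 * (Real.log (1 - x) + x)) := by
  have hbase : 0 ≤ ((D : ℝ) - 3) / 2 := by
    have : (3 : ℝ) ≤ D := mod_cast hD
    linarith
  have hx' : 0 < 1 - x := by linarith
  have hexp : ((D : ℝ) - 3) / 2 * (Real.log (1 - x) + x) =
      Real.log (1 - x) * (((D : ℝ) - 3) / 2) +
        (((D : ℝ) - 3) / 2 + -(((D : ℝ) - 3) / 2 * (1 - x))) := by ring
  rw [negDH, CofD, h, Real.mul_rpow hbase hx'.le, Real.rpow_def_of_pos hx', hexp, Real.exp_add,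
    Real.exp_add, Real.exp_neg (((D : ℝ) - 3) / 2)]
  field_simp

lemma negDH_eq_mul_gaussian {D : ℕ} {σ R t ν s : ℝ} (hD : 3 < D) (hσ : σ ≠ 0)
    (hRt : t ^ 2 = R ^ 2 - σ ^ 2 * ((D : ℝ) - 3))
    (hν : ν ^ 2 = σ ^ 4 * ((D : ℝ) - 3) / (2 * t ^ 2))
    (hx : relDeviation ((D : ℝ) - 3) σ t s < 1) :
    negDH D σ R s = CofD D * (s / σ ^ 2) *
      (Real.exp (exponentError ((D : ℝ) - 3) σ t s) *
        Real.exp (-(s - t) ^ 2 / (2 * ν ^ 2))) := by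
  have hn : (D : ℝ) - 3 ≠ 0 := sub_ne_zero.mpr (mod_cast hD.ne')
  have hR : R ^ 2 = t ^ 2 + σ ^ 2 * ((D : ℝ) - 3) := by linarith
  have hbase : (R ^ 2 - s ^ 2) / (2 * σ ^ 2) =
      ((D : ℝ) - 3) / 2 * (1 - relDeviation ((D : ℝ) - 3) σ t s) := by
    rw [hR, relDeviation]
    field_simp
    ring
  have hgauss : -(s - t) ^ 2 / (2 * ν ^ 2) =
      -(t ^ 2 * (s - t) ^ 2 / (σ ^ 4 * ((D : ℝ) - 3))) := by
    rw [hν]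
    field_simp
  rw [negDH_eq_CofD_mul_exp hD.le hx hbase, hgauss, ← Real.exp_add, exponentError,
    add_neg_cancel_right]

lemma exp_bounds_of_abs_le_two {E : ℝ} (hE : |E| ≤ 2) :
    1 / (8 * Real.exp 1) ≤ 2 / 3 * Real.exp E ∧ 4 / 3 * Real.exp E ≤ 6 * Real.exp 1 := by
  obtain ⟨hE_lower, hE_upper⟩ := abs_le.mp hE
  have he : Real.exp 1 < 3 := Real.exp_one_lt_three
  have hexp_two : Real.exp 2 = Real.exp 1 * Real.exp 1 := by
    rw [← Real.exp_add, one_add_one_eq_two]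
  constructor
  · calc 1 / (8 * Real.exp 1) ≤ 2 / 3 * Real.exp (-2) := by
          rw [Real.exp_neg, hexp_two]
          field_simp
          linarith
      _ ≤ 2 / 3 * Real.exp E := by gcongr
  · calc 4 / 3 * Real.exp E ≤ 4 / 3 * Real.exp 2 := by gcongr
      _ ≤ 6 * Real.exp 1 := by nlinarith [Real.exp_pos 1]

lemma exp_mul_bounds_of_abs_sub_le_div_three {C E G σ t s : ℝ} (hC : 0 ≤ C) (hG : 0 ≤ G)
    (hE : |E| ≤ 2) (hs : |s - t| ≤ t / 3) :
    1 / (8 * Real.exp 1) * C * (t / σ ^ 2) * G ≤ C * (s / σ ^ 2) * (Real.exp E * G) ∧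
      C * (s / σ ^ 2) * (Real.exp E * G) ≤ 6 * Real.exp 1 * C * (t / σ ^ 2) * G := by
  have ht : 0 ≤ t := by linarith [(abs_nonneg _).trans hs]
  obtain ⟨hE_lower, hE_upper⟩ := exp_bounds_of_abs_le_two hE
  obtain ⟨hs_lower, hs_upper⟩ := abs_le.mp hs
  constructor
  · calc 1 / (8 * Real.exp 1) * C * (t / σ ^ 2) * G
        ≤ 2 / 3 * Real.exp E * C * (t / σ ^ 2) * G := by gcongr
      _ = C * (2 / 3 * t / σ ^ 2) * (Real.exp E * G) := by ring
      _ ≤ C * (s / σ ^ 2) * (Real.exp E * G) := by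
        gcongr
        linarith
  · calc C * (s / σ ^ 2) * (Real.exp E * G)
        ≤ C * (4 / 3 * t / σ ^ 2) * (Real.exp E * G) := by
          gcongr
          linarith
      _ = 4 / 3 * Real.exp E * C * (t / σ ^ 2) * G := by ring
      _ ≤ 6 * Real.exp 1 * C * (t / σ ^ 2) * G := by gcongr

lemma mul_rpow_sixth_le_of_mul_sqrt_le {σ t x y : ℝ} (ht : 0 ≤ t) (hy : 0 ≤ y)
    (hyx : y ≤ x) (hx : 1 ≤ x) (h : σ ^ 2 * √x ≤ t ^ 2) : σ * y ^ ((1 : ℝ) / 6) ≤ t := by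
  refine le_of_sq_le_sq ?_ ht
  calc (σ * y ^ ((1 : ℝ) / 6)) ^ 2 = σ ^ 2 * y ^ ((1 : ℝ) / 3) := by
        rw [mul_pow, ← Real.rpow_mul_natCast hy]
        norm_num
    _ ≤ σ ^ 2 * x ^ ((1 : ℝ) / 3) := by gcongr
    _ ≤ σ ^ 2 * x ^ ((1 : ℝ) / 2) := by
        gcongr
        norm_num
    _ ≤ t ^ 2 := by rwa [← Real.sqrt_eq_rpow]

lemma abs_sub_le_div_three_of_mul_sqrt_le {D : ℕ} {σ t s : ℝ} (hD : 3 ≤ D) (ht : 0 ≤ t)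
    (hlow : σ ^ 2 * √D ≤ t ^ 2) (hs : |s - t| ≤ 1 / 3 * σ * ((D : ℝ) - 3) ^ ((1 : ℝ) / 6)) :
    |s - t| ≤ t / 3 := by
  have hD' : (3 : ℝ) ≤ D := mod_cast hD
  have hroot : σ * ((D : ℝ) - 3) ^ ((1 : ℝ) / 6) ≤ t :=
    mul_rpow_sixth_le_of_mul_sqrt_le ht (by linarith) (by linarith) (by linarith) hlow
  linarith

theorem subgaussian_bounds_neg_h_deriv_general (D : ℕ) (hD : 30 ≤ D) (σ R : ℝ)
    (hσ : 0 < σ) (hRD : σ ^ 2 * ((D : ℝ) - 3) < R ^ 2)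
    (sstar ν : ℝ)
    (hsstar : sstar = Real.sqrt (R ^ 2 - σ ^ 2 * ((D : ℝ) - 3)))
    (hν : ν = Real.sqrt (σ ^ 4 * ((D : ℝ) - 3) / (2 * sstar ^ 2)))
    (hhigh : sstar ^ 2 ≤ 3 * σ ^ 2 * D)
    (s : ℝ) (hs : |s - sstar| ≤ (1 / 3) * σ * ((D : ℝ) - 3) ^ ((1 : ℝ) / 6))
    (hs_third : |s - sstar| ≤ sstar / 3) :
    (1 / (8 * Real.exp 1)) * CofD D * (sstar / σ ^ 2) *
        Real.exp (-(s - sstar) ^ 2 / (2 * ν ^ 2)) ≤ negDH D σ R s ∧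
    negDH D σ R s ≤ 6 * Real.exp 1 * CofD D * (sstar / σ ^ 2) *
        Real.exp (-(s - sstar) ^ 2 / (2 * ν ^ 2)) := by
  have hn : 27 ≤ (D : ℝ) - 3 := by
    have : (30 : ℝ) ≤ D := mod_cast hD
    linarith
  have hsstar_pos : 0 < sstar := hsstar ▸ Real.sqrt_pos.mpr (sub_pos.mpr hRD)
  have hsstar_sq : sstar ^ 2 = R ^ 2 - σ ^ 2 * ((D : ℝ) - 3) := by
    rw [hsstar, Real.sq_sqrt (sub_pos.mpr hRD).le]
  have hν_sq : ν ^ 2 = σ ^ 4 * ((D : ℝ) - 3) / (2 * sstar ^ 2) := by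
    rw [hν, Real.sq_sqrt (by positivity)]
  obtain ⟨hx, hE⟩ := relDeviation_lt_one_and_abs_exponentError_le_two hn hσ hsstar_pos.le
    (by rwa [sub_add_cancel]) hs
  rw [negDH_eq_mul_gaussian (by omega) hσ.ne' hsstar_sq hν_sq hx]
  exact exp_mul_bounds_of_abs_sub_le_div_three (CofD_pos (by omega)).le (Real.exp_pos _).le hE
    hs_third

/-- **Subgaussian bounds for `-h'` near the phase transition.**  With
`s⋆ = √(R² - σ²(D-3))`, `ν² = σ⁴(D-3)/(2s⋆²)`, if `D > 192` and
`σ²√D ≤ s⋆² ≤ 3σ²D`, then for `|s - s⋆| ≤ (1/3)σ(D-3)^(1/6)`,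
`(1/(8e)) C(D) (s⋆/σ²) exp(-(s-s⋆)²/(2ν²)) ≤ -h'(s)
  ≤ 6e C(D) (s⋆/σ²) exp(-(s-s⋆)²/(2ν²))`. -/
theorem subgaussian_bounds_neg_h_deriv (D : ℕ) (hD : 192 < D) (σ R : ℝ)
    (hσ : 0 < σ) (hR : 0 < R) (hRD : σ ^ 2 * ((D : ℝ) - 3) < R ^ 2)
    (sstar ν : ℝ)
    (hsstar : sstar = Real.sqrt (R ^ 2 - σ ^ 2 * ((D : ℝ) - 3)))
    (hν : ν = Real.sqrt (σ ^ 4 * ((D : ℝ) - 3) / (2 * sstar ^ 2)))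
    (hlow : σ ^ 2 * Real.sqrt D ≤ sstar ^ 2)
    (hhigh : sstar ^ 2 ≤ 3 * σ ^ 2 * D)
    (s : ℝ) (hs : |s - sstar| ≤ (1 / 3) * σ * ((D : ℝ) - 3) ^ ((1 : ℝ) / 6)) :
    (1 / (8 * Real.exp 1)) * CofD D * (sstar / σ ^ 2) *
        Real.exp (-(s - sstar) ^ 2 / (2 * ν ^ 2)) ≤ negDH D σ R s ∧
    negDH D σ R s ≤ 6 * Real.exp 1 * CofD D * (sstar / σ ^ 2) *
        Real.exp (-(s - sstar) ^ 2 / (2 * ν ^ 2)) :=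
  subgaussian_bounds_neg_h_deriv_general D (by omega) σ R hσ hRD sstar ν hsstar hν hhigh s hs
    (abs_sub_le_div_three_of_mul_sqrt_le (by omega) (hsstar ▸ Real.sqrt_nonneg _) hlow hs)
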